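/- Let X = (P₁,P₂,P₃) and Y = (Q₁,Q₂,Q₃) be vector fields on 𝕋² with all components of degree at most 2. Then there exists A ∈ ℝ[x,y,z] with deg A ≤ 2 such that the Lie bracket satisfies [X,Y] = (A·y, −A·x, 0). Consequently [X,Y](x²+y²) = 0 and [X,Y](z) = 0, so x²+y² and z are two functionally independent first integrals of [X,Y], which is therefore completely integrable. -/

import Mathlib

open MvPolynomial

/-- Derivative of `g` along the polynomial vector field `(P, Q, R)` in `ℝ[x,y,z]`. -/
noncomputable def vf (P Q R g : MvPolynomial (Fin 3) ℝ) : MvPolynomial (Fin 3) ℝ :=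
  P * pderiv 0 g + Q * pderiv 1 g + R * pderiv 2 g

/-- The defining polynomial `F = (x²+y²-a²)² + z² - 1` of the torus `𝕋²`. -/
noncomputable def torusF (a : ℝ) : MvPolynomial (Fin 3) ℝ :=
  (X 0 ^ 2 + X 1 ^ 2 - C (a ^ 2)) ^ 2 + X 2 ^ 2 - 1

/-- `(P, Q, R)` is a polynomial vector field on the torus `𝕋²`. -/
def IsVFOnTorus (a : ℝ) (P Q R : MvPolynomial (Fin 3) ℝ) : Prop :=
  ∃ K : MvPolynomial (Fin 3) ℝ, vf P Q R (torusF a) = K * torusF a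

/-! Write `s = x² + y² - a²`, so that `F = s² + z² - 1`. Comparing degrees and setting `z = 0` in
`4 s (x P + y Q) + 2 z R = K F` shows that every quadratic vector field on the torus has the form
`k V + b W` with `k ∈ ℝ` and `deg b ≤ 1`, where `V = (x z, y z, 2 (z² - 1 - a² s))` and
`W = (y, -x, 0)`. Since `V` and `W` commute, the Leibniz rule gives
`[k V + b W, l V + d W] = A W` with `A = (k V + b W)(d) - (l V + d W)(b)`, and `deg A ≤ 2` because
differentiating a polynomial lowers its degree. -/

section Derivation

variable {R A : Type*} [CommRing R] [CommRing A] [Algebra R A]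

theorem lie_smul_add_smul_of_lie_eq_zero {V W : Derivation R A A} (hVW : ⁅V, W⁆ = 0)
    (k l : R) (b d : A) :
    ⁅k • V + b • W, l • V + d • W⁆ = ((k • V + b • W) d - (l • V + d • W) b) • W := by
  ext f
  have hcomm : V (W f) = W (V f) := by
    simpa [Derivation.commutator_apply, sub_eq_zero] using congr($hVW f)
  simp only [Derivation.commutator_apply, Derivation.add_apply, Derivation.smul_apply, map_add,
    Derivation.map_smul, Derivation.leibniz, smul_eq_mul, hcomm, smul_add]
  simp only [Algebra.smul_def]
  ring

end Derivation

section MvPolynomial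

variable {σ R : Type*}

theorem totalDegree_pderiv_le [CommSemiring R] (i : σ) (p : MvPolynomial σ R) :
    (pderiv i p).totalDegree ≤ p.totalDegree - 1 := by
  refine Finset.sup_le fun m hm => ?_
  have hmem : m + Finsupp.single i 1 ∈ p.support := by
    rw [mem_support_iff, coeff_pderiv] at hm
    exact mem_support_iff.2 (left_ne_zero_of_mul hm)
  have hdeg := le_totalDegree hmem
  rw [Finsupp.sum_add_index' (fun _ => rfl) (fun _ _ _ => rfl),
    Finsupp.sum_single_index rfl] at hdeg
  exact Nat.le_sub_one_of_lt hdeg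

theorem totalDegree_modMonomial_le [CommSemiring R] (m : σ →₀ ℕ) (p : MvPolynomial σ R) :
    (p.modMonomial m).totalDegree ≤ p.totalDegree := by
  refine totalDegree_le_of_support_subset fun n hn => ?_
  rw [mem_support_iff] at hn ⊢
  by_cases hmn : m ≤ n
  · exact absurd (coeff_modMonomial_of_le p hmn) hn
  · rwa [coeff_modMonomial_of_not_le p hmn] at hn

section CommRing

variable [CommRing R]

theorem totalDegree_X_pow_sub_one_le [Nontrivial R] (i : σ) (n : ℕ) :
    (X i ^ n - 1 : MvPolynomial σ R).totalDegree ≤ n := by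
  simpa only [C_1, totalDegree_X_pow] using totalDegree_sub_C_le (X i ^ n) (1 : R)

theorem degreeOf_modMonomial_single (i : σ) (p : MvPolynomial σ R) :
    (p.modMonomial (Finsupp.single i 1)).degreeOf i = 0 := by
  have hsupp := (eq_modMonomial_single_iff
    ⟨_, sub_eq_of_eq_add (p.divMonomial_add_modMonomial_single i).symm⟩).1 rfl
  exact Nat.le_zero.1 (degreeOf_le_iff.2 fun n hn => (hsupp n hn).le)

end CommRing

variable [CommRing R] [IsDomain R]

theorem totalDegree_le_of_totalDegree_mul_le {p q : MvPolynomial σ R} (hq : q ≠ 0) {n : ℕ}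
    (h : (p * q).totalDegree ≤ n + q.totalDegree) : p.totalDegree ≤ n := by
  obtain rfl | hp := eq_or_ne p 0
  · simp
  · rw [totalDegree_mul_of_isDomain hp hq] at h
    exact Nat.le_of_add_le_add_right h

theorem eq_zero_of_X_dvd_of_degreeOf_eq_zero {i : σ} {p : MvPolynomial σ R} (hdvd : X i ∣ p)
    (hdeg : p.degreeOf i = 0) : p = 0 := by
  obtain ⟨q, rfl⟩ := hdvd
  by_contra hne
  rw [degreeOf_mul_eq (X_ne_zero i) (right_ne_zero_of_mul hne), degreeOf_X_self] at hdeg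
  omega

-- Setting `X i = 0` turns the divisibility into `p₀ + q₀ * s = 0`, where degrees force `q₀ = 0`.
theorem X_dvd_and_X_dvd_of_X_dvd_add_mul {i : σ} {p q s : MvPolynomial σ R} (hs : s.degreeOf i = 0)
    (hps : p.totalDegree < s.totalDegree) (h : X i ∣ p + q * s) : X i ∣ p ∧ X i ∣ q := by
  have hp := p.divMonomial_add_modMonomial_single i
  have hq := q.divMonomial_add_modMonomial_single i
  have hp₀ := totalDegree_modMonomial_le (Finsupp.single i 1) p
  have hp₀i := degreeOf_modMonomial_single i p
  have hq₀i := degreeOf_modMonomial_single i q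
  rw [X_dvd_iff_modMonomial_eq_zero, X_dvd_iff_modMonomial_eq_zero]
  set p₀ := p.modMonomial (Finsupp.single i 1)
  set q₀ := q.modMonomial (Finsupp.single i 1)
  have hzero : p₀ + q₀ * s = 0 := by
    apply eq_zero_of_X_dvd_of_degreeOf_eq_zero (i := i)
    · obtain ⟨r, hr⟩ := h
      exact ⟨r - p.divMonomial (Finsupp.single i 1) - q.divMonomial (Finsupp.single i 1) * s,
        by linear_combination hr + hp + s * hq⟩
    · have hadd := degreeOf_add_le i p₀ (q₀ * s)
      have hmul := degreeOf_mul_le i q₀ s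
      omega
  have hq₀ : q₀ = 0 := by
    by_contra hne
    have hs0 : s ≠ 0 := by rintro rfl; simp at hps
    have hdeg := totalDegree_mul_of_isDomain hne hs0
    rw [← neg_eq_of_add_eq_zero_right hzero, totalDegree_neg] at hdeg
    omega
  exact ⟨by simpa [hq₀] using hzero, hq₀⟩

theorem exists_eq_X_mul_of_X_mul_add_X_mul_eq_zero {i j : σ} (hij : i ≠ j) {p q : MvPolynomial σ R}
    (h : X i * p + X j * q = 0) : ∃ b, p = X j * b ∧ q = -(X i * b) := by
  have hdvd : X j ∣ X i * p := ⟨-q, by linear_combination h⟩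
  obtain ⟨b, rfl⟩ := (X_prime.dvd_or_dvd hdvd).resolve_left (by simpa [X_dvd_X] using hij.symm)
  exact ⟨b, rfl, mul_left_cancel₀ (X_ne_zero j) (by linear_combination h)⟩

end MvPolynomial

theorem vf_eq_mkDerivation (P Q R g : MvPolynomial (Fin 3) ℝ) :
    vf P Q R g = mkDerivation ℝ ![P, Q, R] g := by
  have hD : P • pderiv 0 + Q • pderiv 1 + R • pderiv 2 = mkDerivation ℝ ![P, Q, R] :=
    derivation_ext fun i => by fin_cases i <;> simp
  exact congr($hD g)

theorem totalDegree_vf_le {P Q R : MvPolynomial (Fin 3) ℝ} {n : ℕ} (hP : P.totalDegree ≤ n)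
    (hQ : Q.totalDegree ≤ n) (hR : R.totalDegree ≤ n) (g : MvPolynomial (Fin 3) ℝ) :
    (vf P Q R g).totalDegree ≤ n + (g.totalDegree - 1) := by
  have hterm {p : MvPolynomial (Fin 3) ℝ} (hp : p.totalDegree ≤ n) (i : Fin 3) :
      (p * pderiv i g).totalDegree ≤ n + (g.totalDegree - 1) :=
    (totalDegree_mul _ _).trans (add_le_add hp (totalDegree_pderiv_le i g))
  exact (totalDegree_add _ _).trans
    (max_le ((totalDegree_add _ _).trans (max_le (hterm hP 0) (hterm hQ 1))) (hterm hR 2))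

/-- The polynomial `x² + y² - a²`, whose zero set is the cylinder over the core circle of `𝕋²`. -/
noncomputable def coreCylinder (a : ℝ) : MvPolynomial (Fin 3) ℝ :=
  X 0 ^ 2 + X 1 ^ 2 - C (a ^ 2)

theorem totalDegree_coreCylinder (a : ℝ) : (coreCylinder a).totalDegree = 2 := by
  apply le_antisymm
  · refine (totalDegree_sub_C_le _ _).trans ((totalDegree_add _ _).trans ?_)
    simp only [totalDegree_X_pow, max_self, le_refl]
  · have hcoeff : coeff (Finsupp.single 0 2) (coreCylinder a) ≠ 0 := by
      simp [coreCylinder, coeff_X_pow, coeff_C, Finsupp.single_left_inj,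
        eq_comm (a := (0 : Fin 3 →₀ ℕ)), -C_pow, -map_pow]
    simpa using le_totalDegree (mem_support_iff.2 hcoeff)

theorem coreCylinder_ne_zero (a : ℝ) : coreCylinder a ≠ 0 := by
  intro h
  simpa [h] using totalDegree_coreCylinder a

theorem degreeOf_two_coreCylinder (a : ℝ) : (coreCylinder a).degreeOf 2 = 0 := by
  refine Nat.le_zero.1 ((degreeOf_sub_le _ _ _).trans (max_le ?_ (degreeOf_C _ _).le))
  refine (degreeOf_add_le _ _ _).trans ?_
  simp [degreeOf_X_pow_of_ne]

theorem torusF_eq (a : ℝ) : torusF a = coreCylinder a ^ 2 + (X 2 ^ 2 - 1) := by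
  rw [torusF, coreCylinder, add_sub_assoc]

theorem totalDegree_torusF (a : ℝ) : (torusF a).totalDegree = 4 := by
  have hs : (coreCylinder a ^ 2).totalDegree = 4 := by
    rw [sq, totalDegree_mul_of_isDomain (coreCylinder_ne_zero a) (coreCylinder_ne_zero a),
      totalDegree_coreCylinder]
  rw [torusF_eq, totalDegree_add_eq_left_of_totalDegree_lt, hs]
  rw [hs]
  exact (totalDegree_X_pow_sub_one_le 2 2).trans_lt (by norm_num)

theorem vf_torusF (a : ℝ) (P Q R : MvPolynomial (Fin 3) ℝ) :
    vf P Q R (torusF a) = 4 * coreCylinder a * (X 0 * P + X 1 * Q) + 2 * X 2 * R := by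
  simp only [vf_eq_mkDerivation, torusF, coreCylinder, map_add, map_sub, Derivation.leibniz_pow,
    Derivation.map_one_eq_zero, derivation_C, mkDerivation_X, Matrix.cons_val, smul_eq_mul,
    nsmul_eq_mul]
  push_cast
  ring

/-- The vector field `(y, -x, 0)` generating the rotations about the `z`-axis. -/
noncomputable def rotationField : Derivation ℝ (MvPolynomial (Fin 3) ℝ) (MvPolynomial (Fin 3) ℝ) :=
  mkDerivation ℝ ![X 1, -X 0, 0]

/-- The rotation-invariant quadratic vector field on `𝕋²` with radial part `z * (x, y)`; its third
component is then forced by tangency to `𝕋²`. -/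
noncomputable def radialField (a : ℝ) :
    Derivation ℝ (MvPolynomial (Fin 3) ℝ) (MvPolynomial (Fin 3) ℝ) :=
  mkDerivation ℝ ![X 2 * X 0, X 2 * X 1, C 2 * (X 2 ^ 2 - 1 - C (a ^ 2) * coreCylinder a)]

theorem lie_radialField_rotationField (a : ℝ) : ⁅radialField a, rotationField⁆ = 0 := by
  refine derivation_ext fun i => ?_
  fin_cases i <;>
    simp [Derivation.commutator_apply, radialField, rotationField, coreCylinder,
      Derivation.leibniz_pow, mul_comm]

section Classification

variable {a : ℝ} {P Q R : MvPolynomial (Fin 3) ℝ}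

theorem totalDegree_cofactor_le {K : MvPolynomial (Fin 3) ℝ} {n : ℕ}
    (hP : P.totalDegree ≤ n + 1) (hQ : Q.totalDegree ≤ n + 1) (hR : R.totalDegree ≤ n + 1)
    (hK : vf P Q R (torusF a) = K * torusF a) : K.totalDegree ≤ n := by
  have hF := totalDegree_torusF a
  refine totalDegree_le_of_totalDegree_mul_le (q := torusF a) (by rintro h; simp [h] at hF) ?_
  have hdeg := totalDegree_vf_le hP hQ hR (torusF a)
  rw [hK] at hdeg
  omega

theorem exists_cofactor_eq_C_mul_X {K : MvPolynomial (Fin 3) ℝ} (hP : P.totalDegree ≤ 2)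
    (hQ : Q.totalDegree ≤ 2) (hR : R.totalDegree ≤ 2) (hK : vf P Q R (torusF a) = K * torusF a) :
    ∃ k m : ℝ, K = C k * X 2 ∧
      4 * (X 0 * P + X 1 * Q) = (C k * coreCylinder a + C m) * X 2 := by
  have hKdeg : K.totalDegree ≤ 1 := totalDegree_cofactor_le hP hQ hR hK
  rw [vf_torusF, torusF_eq] at hK
  obtain ⟨⟨k, rfl⟩, m, hm⟩ := X_dvd_and_X_dvd_of_X_dvd_add_mul (i := 2) (p := K)
    (q := 4 * (X 0 * P + X 1 * Q) - K * coreCylinder a) (degreeOf_two_coreCylinder a)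
    (by rw [totalDegree_coreCylinder]; omega)
    ⟨X 2 * K - 2 * R, by linear_combination hK⟩
  have hkdeg : k.totalDegree ≤ 0 := by
    refine totalDegree_le_of_totalDegree_mul_le (q := X 2) (X_ne_zero 2) ?_
    rwa [mul_comm, totalDegree_X, zero_add]
  rw [Nat.le_zero, totalDegree_eq_zero_iff_eq_C] at hkdeg
  rw [hkdeg] at hK hm ⊢
  have hms : m * coreCylinder a = C (coeff 0 k) * (X 2 ^ 2 - 1) - (R + R) := by
    refine mul_left_cancel₀ (X_ne_zero 2) ?_
    linear_combination hK - coreCylinder a * hm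
  have hmdeg : m.totalDegree ≤ 0 := by
    refine totalDegree_le_of_totalDegree_mul_le (coreCylinder_ne_zero a) ?_
    rw [hms, totalDegree_coreCylinder, C_mul']
    refine (totalDegree_sub _ _).trans (max_le ?_ ((totalDegree_add _ _).trans (max_le hR hR)))
    exact (totalDegree_smul_le _ _).trans (totalDegree_X_pow_sub_one_le 2 2)
  rw [Nat.le_zero, totalDegree_eq_zero_iff_eq_C] at hmdeg
  refine ⟨coeff 0 k, coeff 0 m, mul_comm _ _, ?_⟩
  rw [← hmdeg]
  linear_combination hm

theorem IsVFOnTorus.exists_radial_axial (h : IsVFOnTorus a P Q R) (hP : P.totalDegree ≤ 2)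
    (hQ : Q.totalDegree ≤ 2) (hR : R.totalDegree ≤ 2) :
    ∃ k : ℝ, X 0 * P + X 1 * Q = C k * X 2 * (X 0 ^ 2 + X 1 ^ 2) ∧
      R = C k * (C 2 * (X 2 ^ 2 - 1 - C (a ^ 2) * coreCylinder a)) := by
  obtain ⟨K, hK⟩ := h
  obtain ⟨k, m, rfl, hPQ⟩ := exists_cofactor_eq_C_mul_X hP hQ hR hK
  have hm : m = k * a ^ 2 := by
    have haxis : 0 = k * -a ^ 2 + m := by
      simpa [coreCylinder] using congrArg (eval ![0, 0, 1]) hPQ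
    linear_combination -haxis
  subst hm
  have hradial : 4 * (X 0 * P + X 1 * Q) = C k * X 2 * (X 0 ^ 2 + X 1 ^ 2) := by
    rw [hPQ, coreCylinder, C_mul]
    ring
  have haxial : 2 * R = C k * (X 2 ^ 2 - 1 - C (a ^ 2) * coreCylinder a) := by
    rw [vf_torusF, torusF_eq] at hK
    rw [C_mul] at hPQ
    refine mul_left_cancel₀ (X_ne_zero 2) ?_
    linear_combination hK - coreCylinder a * hPQ
  have hk : (C k : MvPolynomial (Fin 3) ℝ) = 4 * C (k / 4) := by
    rw [← map_ofNat C 4, ← C_mul, mul_div_cancel₀ k four_ne_zero]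
  rw [hk] at hradial haxial
  refine ⟨k / 4, ?_, ?_⟩
  · refine mul_left_cancel₀ (OfNat.ofNat_ne_zero 4) ?_
    linear_combination hradial
  · refine mul_left_cancel₀ two_ne_zero ?_
    rw [map_ofNat C 2]
    linear_combination haxial

theorem IsVFOnTorus.exists_mkDerivation_eq (h : IsVFOnTorus a P Q R) (hP : P.totalDegree ≤ 2)
    (hQ : Q.totalDegree ≤ 2) (hR : R.totalDegree ≤ 2) :
    ∃ (k : ℝ) (b : MvPolynomial (Fin 3) ℝ), b.totalDegree ≤ 1 ∧
      mkDerivation ℝ ![P, Q, R] = k • radialField a + b • rotationField := by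
  obtain ⟨k, hPQ, hRk⟩ := h.exists_radial_axial hP hQ hR
  obtain ⟨b, hPb, hQb⟩ := exists_eq_X_mul_of_X_mul_add_X_mul_eq_zero (i := 0) (j := 1) (by decide)
    (p := P - k • (X 2 * X 0)) (q := Q - k • (X 2 * X 1))
    (by simp only [smul_eq_C_mul]; linear_combination hPQ)
  have hb : b.totalDegree ≤ 1 := by
    refine totalDegree_le_of_totalDegree_mul_le (q := X 1) (X_ne_zero 1) ?_
    rw [mul_comm, ← hPb, totalDegree_X]
    refine (totalDegree_sub _ _).trans (max_le hP ((totalDegree_smul_le _ _).trans ?_))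
    exact (totalDegree_mul _ _).trans (by simp only [totalDegree_X, le_refl])
  refine ⟨k, b, hb, derivation_ext fun i => ?_⟩
  fin_cases i
  · simp [radialField, rotationField, eq_add_of_sub_eq' hPb, mul_comm b]
  · simp [radialField, rotationField, eq_add_of_sub_eq' hQb, mul_comm b]
  · simp [radialField, rotationField, hRk, smul_eq_C_mul]

theorem IsVFOnTorus.exists_lie_eq_smul_rotationField {P' Q' R' : MvPolynomial (Fin 3) ℝ}
    (h : IsVFOnTorus a P Q R) (h' : IsVFOnTorus a P' Q' R')
    (hP : P.totalDegree ≤ 2) (hQ : Q.totalDegree ≤ 2) (hR : R.totalDegree ≤ 2)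
    (hP' : P'.totalDegree ≤ 2) (hQ' : Q'.totalDegree ≤ 2) (hR' : R'.totalDegree ≤ 2) :
    ∃ A : MvPolynomial (Fin 3) ℝ, A.totalDegree ≤ 2 ∧
      ⁅mkDerivation ℝ ![P, Q, R], mkDerivation ℝ ![P', Q', R']⁆ = A • rotationField := by
  obtain ⟨k, b, hb, hX⟩ := h.exists_mkDerivation_eq hP hQ hR
  obtain ⟨l, d, hd, hY⟩ := h'.exists_mkDerivation_eq hP' hQ' hR'
  refine ⟨vf P Q R d - vf P' Q' R' b, ?_, ?_⟩
  · have hXd := totalDegree_vf_le hP hQ hR d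
    have hYb := totalDegree_vf_le hP' hQ' hR' b
    exact (totalDegree_sub _ _).trans (max_le (by omega) (by omega))
  · rw [vf_eq_mkDerivation, vf_eq_mkDerivation, hX, hY,
      lie_smul_add_smul_of_lie_eq_zero (lie_radialField_rotationField a)]

end Classification

theorem stmt_2_general (a : ℝ) (P₁ P₂ P₃ Q₁ Q₂ Q₃ : MvPolynomial (Fin 3) ℝ)
    (hP₁ : P₁.totalDegree ≤ 2) (hP₂ : P₂.totalDegree ≤ 2) (hP₃ : P₃.totalDegree ≤ 2)
    (hQ₁ : Q₁.totalDegree ≤ 2) (hQ₂ : Q₂.totalDegree ≤ 2) (hQ₃ : Q₃.totalDegree ≤ 2)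
    (hX : IsVFOnTorus a P₁ P₂ P₃) (hY : IsVFOnTorus a Q₁ Q₂ Q₃) :
    ∃ A : MvPolynomial (Fin 3) ℝ, A.totalDegree ≤ 2 ∧
      vf P₁ P₂ P₃ Q₁ - vf Q₁ Q₂ Q₃ P₁ = A * X 1 ∧
      vf P₁ P₂ P₃ Q₂ - vf Q₁ Q₂ Q₃ P₂ = -(A * X 0) ∧
      vf P₁ P₂ P₃ Q₃ - vf Q₁ Q₂ Q₃ P₃ = 0 ∧
      vf (vf P₁ P₂ P₃ Q₁ - vf Q₁ Q₂ Q₃ P₁) (vf P₁ P₂ P₃ Q₂ - vf Q₁ Q₂ Q₃ P₂)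
        (vf P₁ P₂ P₃ Q₃ - vf Q₁ Q₂ Q₃ P₃) (X 0 ^ 2 + X 1 ^ 2) = 0 ∧
      vf (vf P₁ P₂ P₃ Q₁ - vf Q₁ Q₂ Q₃ P₁) (vf P₁ P₂ P₃ Q₂ - vf Q₁ Q₂ Q₃ P₂)
        (vf P₁ P₂ P₃ Q₃ - vf Q₁ Q₂ Q₃ P₃) (X 2) = 0 := by
  obtain ⟨A, hA, hlie⟩ :=
    hX.exists_lie_eq_smul_rotationField hY hP₁ hP₂ hP₃ hQ₁ hQ₂ hQ₃
  have h₁ : vf P₁ P₂ P₃ Q₁ - vf Q₁ Q₂ Q₃ P₁ = A * X 1 := by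
    simpa [Derivation.commutator_apply, rotationField, vf_eq_mkDerivation] using congr($hlie (X 0))
  have h₂ : vf P₁ P₂ P₃ Q₂ - vf Q₁ Q₂ Q₃ P₂ = -(A * X 0) := by
    simpa [Derivation.commutator_apply, rotationField, vf_eq_mkDerivation] using congr($hlie (X 1))
  have h₃ : vf P₁ P₂ P₃ Q₃ - vf Q₁ Q₂ Q₃ P₃ = 0 := by
    simpa [Derivation.commutator_apply, rotationField, vf_eq_mkDerivation] using congr($hlie (X 2))
  refine ⟨A, hA, h₁, h₂, h₃, ?_, ?_⟩ <;> rw [h₁, h₂, h₃]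
  · simp only [vf_eq_mkDerivation, map_add, Derivation.leibniz_pow, mkDerivation_X,
      Matrix.cons_val, smul_eq_mul]
    ring
  · simp [vf]

theorem stmt_2 (a : ℝ) (ha : 1 < a) (P₁ P₂ P₃ Q₁ Q₂ Q₃ : MvPolynomial (Fin 3) ℝ)
    (hP₁ : P₁.totalDegree ≤ 2) (hP₂ : P₂.totalDegree ≤ 2) (hP₃ : P₃.totalDegree ≤ 2)
    (hQ₁ : Q₁.totalDegree ≤ 2) (hQ₂ : Q₂.totalDegree ≤ 2) (hQ₃ : Q₃.totalDegree ≤ 2)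
    (hX : IsVFOnTorus a P₁ P₂ P₃) (hY : IsVFOnTorus a Q₁ Q₂ Q₃) :
    ∃ A : MvPolynomial (Fin 3) ℝ, A.totalDegree ≤ 2 ∧
      vf P₁ P₂ P₃ Q₁ - vf Q₁ Q₂ Q₃ P₁ = A * X 1 ∧
      vf P₁ P₂ P₃ Q₂ - vf Q₁ Q₂ Q₃ P₂ = -(A * X 0) ∧
      vf P₁ P₂ P₃ Q₃ - vf Q₁ Q₂ Q₃ P₃ = 0 ∧
      vf (vf P₁ P₂ P₃ Q₁ - vf Q₁ Q₂ Q₃ P₁) (vf P₁ P₂ P₃ Q₂ - vf Q₁ Q₂ Q₃ P₂)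
        (vf P₁ P₂ P₃ Q₃ - vf Q₁ Q₂ Q₃ P₃) (X 0 ^ 2 + X 1 ^ 2) = 0 ∧
      vf (vf P₁ P₂ P₃ Q₁ - vf Q₁ Q₂ Q₃ P₁) (vf P₁ P₂ P₃ Q₂ - vf Q₁ Q₂ Q₃ P₂)
        (vf P₁ P₂ P₃ Q₃ - vf Q₁ Q₂ Q₃ P₃) (X 2) = 0 :=
  stmt_2_general a P₁ P₂ P₃ Q₁ Q₂ Q₃ hP₁ hP₂ hP₃ hQ₁ hQ₂ hQ₃ hX hY
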